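/- Consider an n-server PIR scheme for a database of k records of R bits each, with k ≥ 3 and R ≥ 1, whose download complexity is exactly R + 1. Then for every possible query tuple (q_1, …, q_n), each server responds with at most one bit (d_r(q_r) ≤ 1 for every r), and the total number of bits downloaded satisfies R ≤ Σ_r d_r(q_r) ≤ R + 1; that is, exactly R or R + 1 servers respond with one bit each. -/

import Mathlib

open scoped ENNReal

/-- An `n`-server PIR scheme for a database of `k` records of `R` bits each. -/
structure PIRScheme (n k R : ℕ) where
  /-- The query set for each server. -/
  Q : Fin n → Type
  /-- Each query set is finite. -/
  fintypeQ : ∀ r, Fintype (Q r)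
  /-- The storage size (in bits) of each server. -/
  s : Fin n → ℕ
  /-- The encoding map of each server. -/
  E : (r : Fin n) → (Fin k → Fin R → Bool) → (Fin (s r) → Bool)
  /-- For each record index `ℓ`, a probability distribution on query tuples. -/
  D : Fin k → PMF ((r : Fin n) → Q r)
  /-- The response length of each server on each query. -/
  d : (r : Fin n) → Q r → ℕ
  /-- The deterministic response map of each server. -/
  resp : (r : Fin n) → (q : Q r) → (Fin (s r) → Bool) → (Fin (d r q) → Bool)
  /-- The reconstruction function. -/
  recon : (ℓ : Fin k) → (q : (r : Fin n) → Q r) →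
    ((r : Fin n) → (Fin (d r (q r)) → Bool)) → (Fin R → Bool)
  /-- Correctness. -/
  correct : ∀ (X : Fin k → Fin R → Bool) (ℓ : Fin k) (q : (r : Fin n) → Q r),
    q ∈ (D ℓ).support →
    recon ℓ q (fun r => resp r (q r) (E r X)) = X ℓ
  /-- Privacy: the marginal of each query component does not depend on `ℓ`. -/
  privacy : ∀ (r : Fin n) (ℓ ℓ' : Fin k),
    (D ℓ).map (fun q => q r) = (D ℓ').map (fun q => q r)

attribute [instance] PIRScheme.fintypeQ

/-- A query tuple is possible if it lies in the support of `D ℓ` for some `ℓ`. -/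
def PIRScheme.Possible {n k R : ℕ} (S : PIRScheme n k R)
    (q : (r : Fin n) → S.Q r) : Prop :=
  ∃ ℓ, q ∈ (S.D ℓ).support

/-- The download complexity: the maximum, over possible query tuples, of the
total number of downloaded bits. -/
noncomputable def PIRScheme.downloadComplexity {n k R : ℕ} (S : PIRScheme n k R) : ℕ :=
  letI : DecidablePred S.Possible := Classical.decPred _
  (Finset.univ.filter S.Possible).sup (fun q => ∑ r, S.d r (q r))

/-!
Fix a possible query `a` to server `r`. By privacy, for every record `ℓ` it extends to a query tuple
retrieving `ℓ`, so the answer `F X` of server `r` together with the answers `G ℓ X` of the other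
servers determines `X ℓ`, while the pair `(F X, G ℓ X)` takes at most `2 ^ (R + 1)` values.

Suppose that `F` has at least two bits. Then `G ℓ` has fewer than `R` bits, so `F` depends on
every record. By pigeonhole, fixing a suitable value of record `i` leaves at most two values of `F`;
on these databases `(F, G j)` takes at most `2 ^ R` values, and since they determine record `j`, all
of them are attained by varying record `j` alone. Hence on these databases `F X` depends on record
`j` only, contradicting its dependence on a third record `l`.
-/

section FactorsThrough

variable {α β γ δ : Type*}

theorem exists_ncard_image_fiber_le {V : Type*} [Finite V] [Nonempty V] [Finite β] [Finite γ]
    {g : α → V} {F : α → β} {G : α → γ} {n : ℕ} (hg : g.FactorsThrough fun a => (F a, G a))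
    (hcard : Nat.card β * Nat.card γ ≤ Nat.card V * n) :
    ∃ x, (F '' {a | g a = x}).ncard ≤ n := by
  classical
  have := Fintype.ofFinite V
  have := Fintype.ofFinite (β × γ)
  obtain ⟨e, he⟩ := (Function.factorsThrough_iff g).1 hg
  obtain ⟨x, hx⟩ : ∃ x, Finset.card {p | e p = x} ≤ n := by
    apply Fintype.exists_card_fiber_le_of_card_le_mul
    rwa [← Nat.card_eq_fintype_card, ← Nat.card_eq_fintype_card, Nat.card_prod]
  have hsub : F '' {a | g a = x} ⊆ Prod.fst '' {p | e p = x} := by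
    rintro _ ⟨a, rfl, rfl⟩
    exact ⟨(F a, G a), (congrFun he a).symm, rfl⟩
  refine ⟨x, ?_⟩
  calc (F '' {a | g a = x}).ncard
      ≤ (Prod.fst '' {p | e p = x}).ncard := Set.ncard_le_ncard hsub
    _ ≤ {p | e p = x}.ncard := Set.ncard_image_le
    _ ≤ n := by simpa [Set.ncard_eq_toFinset_card'] using hx

variable {ι : Type*} {V : ι → Type*} {i j l : ι} {F : (∀ i, V i) → β}

section Update

variable [DecidableEq ι] {G : (∀ i, V i) → γ}

theorem injective_comp_update {H : (∀ i, V i) → δ}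
    (hH : (Function.eval (β := V) i).FactorsThrough H) (X : ∀ i, V i) :
    Function.Injective fun v => H (Function.update X i v) := fun v w h => by
  simpa only [Function.eval, Function.update_self] using hH h

theorem exists_apply_update_ne [Finite γ]
    (hFG : (Function.eval (β := V) i).FactorsThrough fun X => (F X, G X))
    (hcard : Nat.card γ < Nat.card (V i)) (X : ∀ i, V i) :
    ∃ v, F (Function.update X i v) ≠ F X := by
  by_contra! hF
  have hG : Function.Injective fun v => G (Function.update X i v) := fun v w h =>
    injective_comp_update hFG X (Prod.ext ((hF v).trans (hF w).symm) h)
  exact hcard.not_ge (Nat.card_le_card_of_injective _ hG)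

theorem apply_eq_of_ncard_image_mul_card_le [Finite β] [Finite γ]
    (hFG : (Function.eval (β := V) i).FactorsThrough fun X => (F X, G X))
    {A : Set (∀ i, V i)} (hcard : (F '' A).ncard * Nat.card γ ≤ Nat.card (V i))
    {X Y : ∀ i, V i} (hX : ∀ v, Function.update X i v ∈ A) (hY : Y ∈ A) (hXY : Y i = X i) :
    F Y = F X := by
  set φ : V i → β × γ := fun v => (F (Function.update X i v), G (Function.update X i v))
  have hrange : Set.range φ = (F '' A) ×ˢ Set.univ := by
    apply Set.eq_of_subset_of_ncard_le _ _ (Set.toFinite _)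
    · rintro _ ⟨v, rfl⟩
      exact ⟨Set.mem_image_of_mem F (hX v), Set.mem_univ _⟩
    · rwa [Set.ncard_prod, Set.ncard_univ,
        Set.ncard_range_of_injective (injective_comp_update hFG X)]
  obtain ⟨v, hv⟩ : (F Y, G Y) ∈ Set.range φ :=
    hrange ▸ ⟨Set.mem_image_of_mem F hY, Set.mem_univ _⟩
  have hvX : v = X i := by
    simpa only [Function.eval, Function.update_self, hXY] using hFG hv
  calc F Y = F (Function.update X i v) := congrArg Prod.fst hv.symm
    _ = F X := by rw [hvX, Function.update_eq_self]

end Update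

theorem card_lt_four_of_eval_factorsThrough [∀ i, Finite (V i)] [∀ i, Nonempty (V i)] [Finite β]
    {γ : ι → Type*} [∀ i, Finite (γ i)] {G : ∀ i, (∀ i, V i) → γ i}
    (hFG : ∀ i, (Function.eval (β := V) i).FactorsThrough fun X => (F X, G i X))
    (hcard : ∀ i, Nat.card β * Nat.card (γ i) ≤ 2 * Nat.card (V i))
    (hij : i ≠ j) (hil : i ≠ l) (hjl : j ≠ l) : Nat.card β < 4 := by
  classical
  by_contra! hβ
  have hγ (m : ι) : 2 * Nat.card (γ m) ≤ Nat.card (V m) := by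
    have := (Nat.mul_le_mul_right _ hβ).trans (hcard m)
    lia
  obtain ⟨x, hx⟩ := exists_ncard_image_fiber_le (hFG i) ((hcard i).trans_eq (mul_comm _ _))
  let X : ∀ i, V i := Function.update (fun _ => Classical.arbitrary _) i x
  have hX : X i = x := Function.update_self ..
  have hlt : Nat.card (γ l) < Nat.card (V l) := by
    have := Nat.card_pos (α := V l)
    have := hγ l
    lia
  obtain ⟨v, hv⟩ := exists_apply_update_ne (hFG l) hlt X
  refine hv (apply_eq_of_ncard_image_mul_card_le (hFG j) (A := {X | X i = x})
    ((Nat.mul_le_mul_right _ hx).trans (hγ j)) (fun w => ?_) ?_ ?_)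
  · exact (Function.update_of_ne hij w X).trans hX
  · exact (Function.update_of_ne hil v X).trans hX
  · exact Function.update_of_ne hjl v X

end FactorsThrough

theorem card_pi_bitString {ι : Type*} [Fintype ι] (d : ι → ℕ) :
    Nat.card (∀ i, Fin (d i) → Bool) = 2 ^ ∑ i, d i := by
  simp [Nat.card_pi, Finset.prod_pow_eq_pow_sum]

namespace PIRScheme

variable {n k R : ℕ} (S : PIRScheme n k R) {q : (r : Fin n) → S.Q r}

/-- The response of server `r` to the query `a`, as a function of the database rather than of the
stored string. -/
def answer (r : Fin n) (a : S.Q r) (X : Fin k → Fin R → Bool) : Fin (S.d r a) → Bool :=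
  S.resp r a (S.E r X)

theorem eval_factorsThrough_answer {ℓ : Fin k} (hq : q ∈ (S.D ℓ).support) :
    (Function.eval ℓ).FactorsThrough fun X r => S.answer r (q r) X := fun X Y h =>
  calc X ℓ = S.recon ℓ q fun r => S.answer r (q r) X := (S.correct X ℓ q hq).symm
    _ = S.recon ℓ q fun r => S.answer r (q r) Y := congrArg _ h
    _ = Y ℓ := S.correct Y ℓ q hq

theorem eval_factorsThrough_answer_prod {ℓ : Fin k} (hq : q ∈ (S.D ℓ).support) (r : Fin n) :
    (Function.eval ℓ).FactorsThrough fun X =>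
      (S.answer r (q r) X, fun i : {i // i ≠ r} => S.answer i (q i) X) := fun _ _ h =>
  S.eval_factorsThrough_answer hq <|
    (Equiv.piSplitAt r fun i => Fin (S.d i (q i)) → Bool).injective h

variable {S}

theorem Possible.sum_d_le_downloadComplexity (hq : S.Possible q) :
    ∑ r, S.d r (q r) ≤ S.downloadComplexity := by
  classical
  exact Finset.le_sup (f := fun q : (r : Fin n) → S.Q r => ∑ r, S.d r (q r)) (by simpa using hq)

theorem Possible.le_sum_d (hq : S.Possible q) : R ≤ ∑ r, S.d r (q r) := by
  obtain ⟨ℓ, hℓ⟩ := hq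
  have hcard := Nat.card_le_card_of_injective _
    (injective_comp_update (S.eval_factorsThrough_answer hℓ) fun _ _ => false)
  rw [card_pi_bitString] at hcard
  exact (Nat.pow_le_pow_iff_right one_lt_two).1 (by simpa using hcard)

theorem Possible.exists_mem_support_apply_eq (hq : S.Possible q) (r : Fin n) (ℓ : Fin k) :
    ∃ q' ∈ (S.D ℓ).support, q' r = q r := by
  obtain ⟨ℓ', hℓ'⟩ := hq
  have hr : q r ∈ ((S.D ℓ').map fun q => q r).support := by
    rw [PMF.support_map]
    exact Set.mem_image_of_mem _ hℓ'
  rwa [S.privacy r ℓ' ℓ, PMF.support_map] at hr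

theorem Possible.card_answer_mul_card_le (hq : S.Possible q) (r : Fin n) :
    Nat.card (Fin (S.d r (q r)) → Bool) *
        Nat.card (∀ i : {i // i ≠ r}, Fin (S.d i (q i)) → Bool) ≤ 2 ^ S.downloadComplexity := by
  rw [← Nat.card_prod,
    ← Nat.card_congr (Equiv.piSplitAt r fun i => Fin (S.d i (q i)) → Bool), card_pi_bitString]
  exact Nat.pow_le_pow_right two_pos hq.sum_d_le_downloadComplexity

theorem Possible.d_le_one (hq : S.Possible q) (hk : 3 ≤ k) (hD : S.downloadComplexity ≤ R + 1)
    (r : Fin n) : S.d r (q r) ≤ 1 := by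
  obtain ⟨i, j, l, hij, hil, hjl⟩ :=
    Fintype.two_lt_card_iff.1 (by rwa [Fintype.card_fin])
  choose q' hq' hr using hq.exists_mem_support_apply_eq r
  have hcard : Nat.card (Fin (S.d r (q r)) → Bool) < 2 ^ 2 := by
    refine card_lt_four_of_eval_factorsThrough (F := S.answer r (q r))
      (G := fun ℓ X (i : {i // i ≠ r}) => S.answer i (q' ℓ i) X)
      (fun ℓ => hr ℓ ▸ S.eval_factorsThrough_answer_prod (hq' ℓ) r) (fun ℓ => ?_) hij hil hjl
    calc Nat.card (Fin (S.d r (q r)) → Bool) *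
          Nat.card (∀ i : {i // i ≠ r}, Fin (S.d i (q' ℓ i)) → Bool)
        ≤ 2 ^ S.downloadComplexity := hr ℓ ▸ Possible.card_answer_mul_card_le ⟨ℓ, hq' ℓ⟩ r
      _ ≤ 2 ^ (R + 1) := Nat.pow_le_pow_right two_pos hD
      _ = 2 * Nat.card (Fin R → Bool) := by simp [pow_succ']
  have hpow : 2 ^ S.d r (q r) < 2 ^ 2 := by simpa using hcard
  exact Nat.lt_succ_iff.1 ((Nat.pow_lt_pow_iff_right one_lt_two).1 hpow)

end PIRScheme

/-- Corollary 2 of the paper. In a PIR scheme for `k ≥ 3` records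
of `R ≥ 1` bits with download complexity exactly `R + 1`, every server responds with
at most one bit to any possible query, and the total number of downloaded bits is
`R` or `R + 1`. -/
theorem one_bit_per_server (n k R : ℕ) (hk : 3 ≤ k) (hR : 1 ≤ R)
    (S : PIRScheme n k R) (hD : S.downloadComplexity = R + 1) :
    ∀ q : (r : Fin n) → S.Q r, S.Possible q →
      (∀ r : Fin n, S.d r (q r) ≤ 1) ∧
      R ≤ ∑ r : Fin n, S.d r (q r) ∧ ∑ r : Fin n, S.d r (q r) ≤ R + 1 := by
  exact fun q hq => ⟨hq.d_le_one hk hD.le, hq.le_sum_d, hD ▸ hq.sum_d_le_downloadComplexity⟩
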